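/- arXiv:1012.1405 — 8 statements merged into one kernel-verified Lean document; each statement's English description precedes it below -/
import Mathlib

section
/- There exists a constant C₁ > 0 such that for all u ∈ V and v ∈ H, the sequence B(u,v) lies in H and |B(u,v)| ≤ C₁ ‖u‖ |v|. -/
/-!
Since `u ∈ V`, every single term satisfies `k n * ‖u n‖ ≤ ‖u‖_V`. In `B n (u, v)` each `u`-factor
has an index differing from `n` by at most two, so the wave number in front is absorbed by that
factor up to a fixed power of two, which leaves a fixed combination of shifts of `v` times
`‖u‖_V`. Hence `|B n|²` is at most `‖u‖_V²` times a sum of four shifts of `‖v‖²`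
(`goyB_succ_norm_sq_le`), and every shift sums to at most `|v|²`. This gives `C₁ = 2`.
-/

/-- The wave numbers `k n = k₀ * 2 ^ n`. -/
noncomputable def kk (k₀ : ℝ) (n : ℕ) : ℝ := k₀ * 2 ^ n

/-- The GOY bilinear operator, componentwise.  The index `n = 0` is not used (sequences are
indexed from `1`) and the boundary conventions `u₀ = u₋₁ = v₀ = v₋₁ = 0` are realized by the
hypotheses `u 0 = 0`, `v 0 = 0` together with truncated subtraction on `ℕ`. -/
noncomputable def goyB (k₀ : ℝ) (u v : ℕ → ℂ) (n : ℕ) : ℂ :=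
  if n = 0 then 0 else
    Complex.I * (kk k₀ n : ℂ) *
      ((1 / 4 : ℂ) * (starRingEnd ℂ) (u (n + 1)) * (starRingEnd ℂ) (v (n - 1))
        - (1 / 2 : ℂ) * ((starRingEnd ℂ) (u (n + 1)) * (starRingEnd ℂ) (v (n + 2))
            + (starRingEnd ℂ) (u (n + 2)) * (starRingEnd ℂ) (v (n + 1)))
        + (1 / 8 : ℂ) * (starRingEnd ℂ) (u (n - 1)) * (starRingEnd ℂ) (v (n - 2)))

/-- Pointwise bound on the components of index at least one, where `M` is any uniform bound for
`k n * ‖u n‖`. -/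
lemma goyB_succ_norm_sq_le (k₀ : ℝ) (hk₀ : 0 < k₀) (u v : ℕ → ℂ) (M : ℝ)
    (hM : ∀ n, kk k₀ n * ‖u n‖ ≤ M) (m : ℕ) :
    ‖goyB k₀ u v (m + 1)‖ ^ 2 ≤
      M ^ 2 * (‖v m‖ ^ 2 + ‖v (m + 3)‖ ^ 2 + ‖v (m + 2)‖ ^ 2 + ‖v (m - 1)‖ ^ 2) := by
  have hkpos : 0 < kk k₀ m := by unfold kk; positivity
  have hks : ∀ n, kk k₀ (n + 1) = 2 * kk k₀ n := fun n => by unfold kk; ring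
  have hM0 := hM m
  have hM2 := hM (m + 2)
  have hM3 := hM (m + 3)
  rw [hks (m + 1), hks m] at hM2
  rw [hks (m + 2), hks (m + 1), hks m] at hM3
  have hMnn : 0 ≤ M := le_trans (by positivity) hM0
  have htri : ‖goyB k₀ u v (m + 1)‖ ≤ 2 * kk k₀ m *
      (1 / 4 * ‖u (m + 2)‖ * ‖v m‖ + 1 / 2 * (‖u (m + 2)‖ * ‖v (m + 3)‖
        + ‖u (m + 3)‖ * ‖v (m + 2)‖) + 1 / 8 * ‖u m‖ * ‖v (m - 1)‖) := by
    have hidx : m + 1 - 2 = m - 1 := by omega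
    have hk2 : ‖Complex.I * ((kk k₀ (m + 1) : ℝ) : ℂ)‖ = 2 * kk k₀ m := by
      rw [norm_mul, Complex.norm_I, one_mul, Complex.norm_real, hks,
        Real.norm_of_nonneg (by positivity)]
    unfold goyB
    rw [if_neg (Nat.succ_ne_zero m), norm_mul, hk2, hidx, Nat.add_sub_cancel]
    refine mul_le_mul_of_nonneg_left ?_ (by positivity)
    refine (norm_add_le _ _).trans (add_le_add ((norm_sub_le _ _).trans (add_le_add ?_ ?_)) ?_)
    · simp
    · rw [norm_mul]
      refine mul_le_mul (by simp) ((norm_add_le _ _).trans ?_) (norm_nonneg _) (by norm_num)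
      simp
    · simp
  have ha := norm_nonneg (v m)
  have hb := norm_nonneg (v (m + 3))
  have hc := norm_nonneg (v (m + 2))
  have hd := norm_nonneg (v (m - 1))
  have hlin : ‖goyB k₀ u v (m + 1)‖ ≤ M *
      ((‖v m‖ + ‖v (m + 3)‖ + ‖v (m + 2)‖ + ‖v (m - 1)‖) / 4) := by
    have h1 := mul_le_mul_of_nonneg_right hM2 ha
    have h2 := mul_le_mul_of_nonneg_right hM2 hb
    have h3 := mul_le_mul_of_nonneg_right hM3 hc
    have h4 := mul_le_mul_of_nonneg_right hM0 hd
    have h5 := mul_nonneg hMnn ha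
    have h6 := mul_nonneg hMnn hc
    linarith
  calc ‖goyB k₀ u v (m + 1)‖ ^ 2
      ≤ (M * ((‖v m‖ + ‖v (m + 3)‖ + ‖v (m + 2)‖ + ‖v (m - 1)‖) / 4)) ^ 2 := by gcongr
    _ ≤ _ := by
      rw [mul_pow]
      refine mul_le_mul_of_nonneg_left ?_ (sq_nonneg M)
      nlinarith [sq_nonneg (‖v m‖ - ‖v (m + 3)‖), sq_nonneg (‖v m‖ - ‖v (m + 2)‖),
        sq_nonneg (‖v m‖ - ‖v (m - 1)‖), sq_nonneg (‖v (m + 3)‖ - ‖v (m + 2)‖),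
        sq_nonneg (‖v (m + 3)‖ - ‖v (m - 1)‖), sq_nonneg (‖v (m + 2)‖ - ‖v (m - 1)‖)]

/-- There exists `C₁ > 0` such that for all `u ∈ V` and `v ∈ H`,
`B(u,v) ∈ H` and `|B(u,v)| ≤ C₁ ‖u‖ |v|`. -/
theorem goyB_bound_V_H (k₀ : ℝ) (hk₀ : 0 < k₀) :
    ∃ C₁ > 0, ∀ u v : ℕ → ℂ, u 0 = 0 → v 0 = 0 →
      Summable (fun n => ‖u n‖ ^ 2) →
      Summable (fun n => (kk k₀ n) ^ 2 * ‖u n‖ ^ 2) →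
      Summable (fun n => ‖v n‖ ^ 2) →
      Summable (fun n => ‖goyB k₀ u v n‖ ^ 2) ∧
        Real.sqrt (∑' n, ‖goyB k₀ u v n‖ ^ 2) ≤
          C₁ * Real.sqrt (∑' n, (kk k₀ n) ^ 2 * ‖u n‖ ^ 2) *
            Real.sqrt (∑' n, ‖v n‖ ^ 2) := by
  refine ⟨2, two_pos, fun u v _ hv0 _ hV hH => ?_⟩
  set M := Real.sqrt (∑' n, (kk k₀ n) ^ 2 * ‖u n‖ ^ 2) with hMdef
  set S := ∑' n, ‖v n‖ ^ 2 with hSdef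
  have hM : ∀ n, kk k₀ n * ‖u n‖ ≤ M := fun n => by
    apply Real.le_sqrt_of_sq_le
    rw [mul_pow]
    exact hV.le_tsum n fun j _ => by positivity
  have hshift : ∀ j, Summable (fun m => ‖v (m + j)‖ ^ 2) := fun j =>
    (summable_nat_add_iff (f := fun n => ‖v n‖ ^ 2) j).2 hH
  have hshift_le : ∀ j, ∑' m, ‖v (m + j)‖ ^ 2 ≤ S := fun j => by
    rw [hSdef, ← hH.sum_add_tsum_nat_add j]
    exact le_add_of_nonneg_left (Finset.sum_nonneg fun i _ => by positivity)
  -- The backward shift duplicates the entry `v 0` at `m = 0`; it is harmless because `v 0 = 0`.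
  have hback : Summable (fun m => ‖v (m - 1)‖ ^ 2) :=
    (summable_nat_add_iff (f := fun m => ‖v (m - 1)‖ ^ 2) 1).1 (by simpa using hH)
  have hback_eq : ∑' m, ‖v (m - 1)‖ ^ 2 = S := by
    rw [hback.tsum_eq_zero_add]
    simp [hv0, hSdef]
  have hS3 := ((hH.add (hshift 3)).add (hshift 2)).add hback
  have hpt := goyB_succ_norm_sq_le k₀ hk₀ u v M hM
  have hsum1 : Summable (fun m => ‖goyB k₀ u v (m + 1)‖ ^ 2) :=
    Summable.of_nonneg_of_le (fun m => by positivity) hpt (hS3.mul_left (M ^ 2))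
  have hsum : Summable (fun n => ‖goyB k₀ u v n‖ ^ 2) :=
    (summable_nat_add_iff (f := fun n => ‖goyB k₀ u v n‖ ^ 2) 1).1 hsum1
  refine ⟨hsum, ?_⟩
  have hzero : ‖goyB k₀ u v 0‖ ^ 2 = 0 := by simp [goyB]
  have hS0 : 0 ≤ S := tsum_nonneg fun n => by positivity
  have hM0 : 0 ≤ M := Real.sqrt_nonneg _
  have hle : ∑' n, ‖goyB k₀ u v n‖ ^ 2 ≤ (2 * M * Real.sqrt S) ^ 2 := by
    rw [hsum.tsum_eq_zero_add, hzero, zero_add]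
    refine (hsum1.tsum_le_tsum hpt (hS3.mul_left (M ^ 2))).trans ?_
    rw [tsum_mul_left, ((hH.add (hshift 3)).add (hshift 2)).tsum_add hback,
      (hH.add (hshift 3)).tsum_add (hshift 2), hH.tsum_add (hshift 3), hback_eq,
      mul_pow, Real.sq_sqrt hS0]
    nlinarith [hshift_le 3, hshift_le 2, sq_nonneg M,
      mul_le_mul_of_nonneg_left (add_le_add (hshift_le 3) (hshift_le 2)) (sq_nonneg M)]
  exact Real.sqrt_le_iff.2 ⟨by positivity, hle⟩
end

section
/- There exists a constant C₂ > 0 such that for all u ∈ H and v ∈ V, the sequence B(u,v) lies in H and |B(u,v)| ≤ C₂ |u| ‖v‖. -/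
/-- If `M` bounds the weighted sequence `k n * |v n|`, then `B n (u, v)` is controlled by `M` and
three shifts of `u`. At `n = 1` the truncated index `n - 2` is `0`, where `v` vanishes. -/
lemma norm_goyB_le {k₀ : ℝ} (hk₀ : 0 < k₀) {u v : ℕ → ℂ} (hv0 : v 0 = 0) {M : ℝ}
    (hM : ∀ n, kk k₀ n * ‖v n‖ ≤ M) (n : ℕ) :
    ‖goyB k₀ u v n‖ ≤ M * (‖u (n + 1)‖ + ‖u (n + 2)‖ + ‖u (n - 1)‖) := by
  have hk : ∀ m, 0 < kk k₀ m := fun m => by unfold kk; positivity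
  have hM0 : 0 ≤ M := by simpa [hv0] using hM 0
  rcases Nat.eq_zero_or_pos n with rfl | hn
  · simp only [goyB, if_true, norm_zero]
    positivity
  have h1 : kk k₀ n * ‖v (n - 1)‖ ≤ 2 * M := by
    obtain ⟨m, rfl⟩ : ∃ m, n = m + 1 := ⟨n - 1, by omega⟩
    have := hM m
    simp only [kk, pow_succ, Nat.add_sub_cancel] at this ⊢
    linarith
  have h2 : kk k₀ n * ‖v (n + 2)‖ ≤ M := by
    refine le_trans ?_ (hM (n + 2))
    gcongr
    unfold kk
    gcongr <;> norm_num
  have h3 : kk k₀ n * ‖v (n + 1)‖ ≤ M := by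
    refine le_trans ?_ (hM (n + 1))
    gcongr
    unfold kk
    gcongr <;> norm_num
  have h4 : kk k₀ n * ‖v (n - 2)‖ ≤ 4 * M := by
    rcases Nat.lt_or_ge n 2 with h | h
    · have h0 : n - 2 = 0 := by omega
      rw [h0, hv0]
      simp only [norm_zero, mul_zero]
      positivity
    · obtain ⟨m, rfl⟩ : ∃ m, n = m + 2 := ⟨n - 2, by omega⟩
      have := hM m
      simp only [kk, pow_succ, Nat.add_sub_cancel] at this ⊢
      linarith
  have hB : ‖goyB k₀ u v n‖ ≤ kk k₀ n *
      (1 / 4 * ‖u (n + 1)‖ * ‖v (n - 1)‖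
        + 1 / 2 * (‖u (n + 1)‖ * ‖v (n + 2)‖ + ‖u (n + 2)‖ * ‖v (n + 1)‖)
        + 1 / 8 * ‖u (n - 1)‖ * ‖v (n - 2)‖) := by
    rw [goyB, if_neg hn.ne', norm_mul, norm_mul, Complex.norm_I, one_mul, Complex.norm_real,
      Real.norm_of_nonneg (hk n).le]
    refine mul_le_mul_of_nonneg_left ?_ (hk n).le
    refine (norm_add_le _ _).trans (add_le_add ((norm_sub_le _ _).trans (add_le_add ?_ ?_)) ?_)
    · simp
    · rw [norm_mul]
      refine mul_le_mul (by simp) ((norm_add_le _ _).trans (by simp)) (norm_nonneg _) (by norm_num)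
    · simp
  have e1 := mul_le_mul_of_nonneg_left h1 (norm_nonneg (u (n + 1)))
  have e2 := mul_le_mul_of_nonneg_left h2 (norm_nonneg (u (n + 1)))
  have e3 := mul_le_mul_of_nonneg_left h3 (norm_nonneg (u (n + 2)))
  have e4 := mul_le_mul_of_nonneg_left h4 (norm_nonneg (u (n - 1)))
  have p2 := mul_nonneg hM0 (norm_nonneg (u (n + 2)))
  have p3 := mul_nonneg hM0 (norm_nonneg (u (n - 1)))
  linarith

/-- There exists `C₂ > 0` such that for all `u ∈ H` and `v ∈ V`,
`B(u,v) ∈ H` and `|B(u,v)| ≤ C₂ |u| ‖v‖`. -/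
theorem goyB_bound_H_V (k₀ : ℝ) (hk₀ : 0 < k₀) :
    ∃ C₂ > 0, ∀ u v : ℕ → ℂ, u 0 = 0 → v 0 = 0 →
      Summable (fun n => ‖u n‖ ^ 2) →
      Summable (fun n => ‖v n‖ ^ 2) →
      Summable (fun n => (kk k₀ n) ^ 2 * ‖v n‖ ^ 2) →
      Summable (fun n => ‖goyB k₀ u v n‖ ^ 2) ∧
        Real.sqrt (∑' n, ‖goyB k₀ u v n‖ ^ 2) ≤
          C₂ * Real.sqrt (∑' n, ‖u n‖ ^ 2) *
            Real.sqrt (∑' n, (kk k₀ n) ^ 2 * ‖v n‖ ^ 2) := by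
  refine ⟨3, by norm_num, fun u v hu0 hv0 hu _ hv => ?_⟩
  set U := ∑' n, ‖u n‖ ^ 2
  set S := ∑' n, (kk k₀ n) ^ 2 * ‖v n‖ ^ 2
  have hU0 : 0 ≤ U := tsum_nonneg fun n => by positivity
  have hS0 : 0 ≤ S := tsum_nonneg fun n => by positivity
  have hM : ∀ n, kk k₀ n * ‖v n‖ ≤ Real.sqrt S := fun n => by
    refine Real.le_sqrt_of_sq_le ?_
    rw [mul_pow]
    exact hv.le_tsum n fun m _ => by positivity
  have hs1 : Summable fun n => ‖u (n + 1)‖ ^ 2 := (summable_nat_add_iff 1).2 hu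
  have hs2 : Summable fun n => ‖u (n + 2)‖ ^ 2 := (summable_nat_add_iff 2).2 hu
  have hs3 : Summable fun n => ‖u (n - 1)‖ ^ 2 :=
    (summable_nat_add_iff (f := fun n => ‖u (n - 1)‖ ^ 2) 1).1 hu
  have ht1 : ∑' n, ‖u (n + 1)‖ ^ 2 ≤ U := by
    have := hu.sum_add_tsum_nat_add 1
    have : 0 ≤ ∑ i ∈ Finset.range 1, ‖u i‖ ^ 2 := by positivity
    linarith
  have ht2 : ∑' n, ‖u (n + 2)‖ ^ 2 ≤ U := by
    have := hu.sum_add_tsum_nat_add 2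
    have : 0 ≤ ∑ i ∈ Finset.range 2, ‖u i‖ ^ 2 := by positivity
    linarith
  -- At `n = 0` the truncated index `n - 1` is `0`, where `u` vanishes.
  have ht3 : ∑' n, ‖u (n - 1)‖ ^ 2 = U := by
    rw [hs3.tsum_eq_zero_add]
    simp [hu0, U]
  have hpt : ∀ n, ‖goyB k₀ u v n‖ ^ 2 ≤
      3 * S * (‖u (n + 1)‖ ^ 2 + ‖u (n + 2)‖ ^ 2 + ‖u (n - 1)‖ ^ 2) := fun n => by
    have h := pow_le_pow_left₀ (norm_nonneg _) (norm_goyB_le (u := u) hk₀ hv0 hM n) 2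
    rw [mul_pow, Real.sq_sqrt hS0] at h
    refine h.trans ?_
    rw [mul_comm 3 S, mul_assoc]
    refine mul_le_mul_of_nonneg_left ?_ hS0
    nlinarith [sq_nonneg (‖u (n + 1)‖ - ‖u (n + 2)‖), sq_nonneg (‖u (n + 1)‖ - ‖u (n - 1)‖),
      sq_nonneg (‖u (n + 2)‖ - ‖u (n - 1)‖)]
  have hsR := ((hs1.add hs2).add hs3).mul_left (3 * S)
  have hsB : Summable fun n => ‖goyB k₀ u v n‖ ^ 2 :=
    Summable.of_nonneg_of_le (fun n => by positivity) hpt hsR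
  refine ⟨hsB, ?_⟩
  have hsum : ∑' n, ‖goyB k₀ u v n‖ ^ 2 ≤ 3 * S * (U + U + U) := by
    refine (hsB.tsum_le_tsum hpt hsR).trans ?_
    rw [tsum_mul_left, (hs1.add hs2).tsum_add hs3, hs1.tsum_add hs2, ht3]
    gcongr
  refine Real.sqrt_le_iff.2 ⟨by positivity, hsum.trans (le_of_eq ?_)⟩
  rw [mul_pow, mul_pow, Real.sq_sqrt hU0, Real.sq_sqrt hS0]
  ring
end

section
/- There exists a constant C₃ > 0 such that for all u, v ∈ H, the sequence B(u,v) lies in V′ and ‖B(u,v)‖_{V′} ≤ C₃ |u| |v|, i.e. Σ_{n=1}^∞ k_n^{-2} |B_n(u,v)|² ≤ C₃² |u|² |v|². -/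
/-- Pointwise bound: the second argument is only controlled in the sup norm, by `√V`. -/
theorem weighted_goyB_sq_le (k₀ : ℝ) (hk₀ : 0 < k₀) (u v : ℕ → ℂ) (V : ℝ)
    (hV : ∀ m, ‖v m‖ ^ 2 ≤ V) (n : ℕ) :
    (kk k₀ n)⁻¹ ^ 2 * ‖goyB k₀ u v n‖ ^ 2 ≤
      11 / 8 * V * (3 / 4 * ‖u (n + 1)‖ ^ 2 + 1 / 2 * ‖u (n + 2)‖ ^ 2
        + 1 / 8 * ‖u (n - 1)‖ ^ 2) := by
  have hV0 : 0 ≤ V := (sq_nonneg _).trans (hV 0)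
  have hs : ∀ m, ‖v m‖ ≤ √V := fun m => Real.le_sqrt_of_sq_le (hV m)
  have hk : 0 < kk k₀ n := by unfold kk; positivity
  by_cases hn : n = 0
  · simp only [goyB, hn, if_true, norm_zero]
    simp only [ne_eq, OfNat.ofNat_ne_zero, not_false_eq_true, zero_pow, mul_zero]
    positivity
  rw [goyB, if_neg hn, norm_mul, norm_mul, Complex.norm_I, one_mul, Complex.norm_real,
    Real.norm_of_nonneg hk.le, ← mul_pow, inv_mul_cancel_left₀ hk.ne']
  set a := u (n + 1)
  set b := u (n + 2)
  set c := u (n - 1)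
  have key : ‖(1 / 4 : ℂ) * (starRingEnd ℂ) a * (starRingEnd ℂ) (v (n - 1))
        - (1 / 2 : ℂ) * ((starRingEnd ℂ) a * (starRingEnd ℂ) (v (n + 2))
            + (starRingEnd ℂ) b * (starRingEnd ℂ) (v (n + 1)))
        + (1 / 8 : ℂ) * (starRingEnd ℂ) c * (starRingEnd ℂ) (v (n - 2))‖
      ≤ √V * (3 / 4 * ‖a‖ + 1 / 2 * ‖b‖ + 1 / 8 * ‖c‖) := by
    calc _ ≤ 1 / 4 * ‖a‖ * ‖v (n - 1)‖ + 1 / 2 * (‖a‖ * ‖v (n + 2)‖ + ‖b‖ * ‖v (n + 1)‖)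
          + 1 / 8 * ‖c‖ * ‖v (n - 2)‖ := by
          refine (norm_add_le _ _).trans (add_le_add ((norm_sub_le _ _).trans
            (add_le_add ?_ ?_)) ?_)
          · simp
          · rw [norm_mul]
            refine mul_le_mul (by simp) ((norm_add_le _ _).trans ?_) (norm_nonneg _) (by norm_num)
            simp
          · simp
      _ ≤ 1 / 4 * ‖a‖ * √V + 1 / 2 * (‖a‖ * √V + ‖b‖ * √V) + 1 / 8 * ‖c‖ * √V := by
          gcongr <;> exact hs _
      _ = _ := by ring
  refine (pow_le_pow_left₀ (norm_nonneg _) key 2).trans ?_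
  rw [mul_pow, Real.sq_sqrt hV0, mul_comm (11 / 8 : ℝ) V, mul_assoc]
  refine mul_le_mul_of_nonneg_left ?_ hV0
  nlinarith [sq_nonneg (‖a‖ - ‖b‖), sq_nonneg (‖a‖ - ‖c‖), sq_nonneg (‖b‖ - ‖c‖)]

/-- There exists `C₃ > 0` such that for all `u, v ∈ H`, `B(u,v) ∈ V'` and
`‖B(u,v)‖_{V'} ≤ C₃ |u| |v|`, i.e. `Σ (k n)⁻² |Bₙ(u,v)|² ≤ C₃² |u|² |v|²`. -/
theorem goyB_bound_H_H_dual (k₀ : ℝ) (hk₀ : 0 < k₀) :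
    ∃ C₃ > 0, ∀ u v : ℕ → ℂ, u 0 = 0 → v 0 = 0 →
      Summable (fun n => ‖u n‖ ^ 2) →
      Summable (fun n => ‖v n‖ ^ 2) →
      Summable (fun n => (kk k₀ n)⁻¹ ^ 2 * ‖goyB k₀ u v n‖ ^ 2) ∧
        (∑' n, (kk k₀ n)⁻¹ ^ 2 * ‖goyB k₀ u v n‖ ^ 2) ≤
          C₃ ^ 2 * (∑' n, ‖u n‖ ^ 2) * (∑' n, ‖v n‖ ^ 2) := by
  refine ⟨11 / 8, by norm_num, fun u v hu0 _ hu hv => ?_⟩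
  set U := ∑' n, ‖u n‖ ^ 2
  set V := ∑' n, ‖v n‖ ^ 2
  have hle := weighted_goyB_sq_le k₀ hk₀ u v V
    (fun m => hv.le_tsum m fun _ _ => sq_nonneg _)
  have hV0 : 0 ≤ V := tsum_nonneg fun _ => sq_nonneg _
  have h1 : Summable fun n => ‖u (n + 1)‖ ^ 2 := (summable_nat_add_iff 1).2 hu
  have h2 : Summable fun n => ‖u (n + 2)‖ ^ 2 := (summable_nat_add_iff 2).2 hu
  have h3 : Summable fun n => ‖u (n - 1)‖ ^ 2 := (summable_nat_add_iff 1).1 (by simpa using hu)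
  have e1 : ∑' n, ‖u (n + 1)‖ ^ 2 ≤ U :=
    tsum_comp_le_tsum_of_inj hu (fun _ => sq_nonneg _) (add_left_injective 1)
  have e2 : ∑' n, ‖u (n + 2)‖ ^ 2 ≤ U :=
    tsum_comp_le_tsum_of_inj hu (fun _ => sq_nonneg _) (add_left_injective 2)
  -- The truncated shift repeats the index `0`, which is harmless because `u 0 = 0`.
  have e3 : ∑' n, ‖u (n - 1)‖ ^ 2 = U := by
    rw [h3.tsum_eq_zero_add]
    simp [hu0, U]
  have hsum := (((h1.mul_left (3 / 4)).add (h2.mul_left (1 / 2))).add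
    (h3.mul_left (1 / 8))).mul_left (11 / 8 * V)
  have hS := Summable.of_nonneg_of_le (fun n => by positivity) hle hsum
  refine ⟨hS, (hS.tsum_le_tsum hle hsum).trans ?_⟩
  rw [tsum_mul_left, ((h1.mul_left (3 / 4)).add (h2.mul_left (1 / 2))).tsum_add
    (h3.mul_left (1 / 8)), (h1.mul_left (3 / 4)).tsum_add (h2.mul_left (1 / 2)),
    tsum_mul_left, tsum_mul_left, tsum_mul_left, e3]
  calc _ ≤ 11 / 8 * V * (3 / 4 * U + 1 / 2 * U + 1 / 8 * U) := by gcongr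
    _ = _ := by ring
end

section
/- There exists a constant C₄ > 0 such that for all u ∈ H and v ∈ D(A), the sequence B(u,v) lies in V and ‖B(u,v)‖_V ≤ C₄ |u| |Av|, i.e. Σ_{n=1}^∞ k_n² |B_n(u,v)|² ≤ C₄² (Σ_{n=1}^∞ |u_n|²)(Σ_{n=1}^∞ k_n⁴ |v_n|²). -/
lemma norm_goyB_succ_le (k₀ : ℝ) (hk₀ : 0 < k₀) (u v : ℕ → ℂ) (m : ℕ) :
    ‖goyB k₀ u v (m + 1)‖ ≤ kk k₀ (m + 1) *
      (1 / 4 * ‖u (m + 2)‖ * ‖v m‖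
        + 1 / 2 * (‖u (m + 2)‖ * ‖v (m + 3)‖ + ‖u (m + 3)‖ * ‖v (m + 2)‖)
        + 1 / 8 * ‖u m‖ * ‖v (m - 1)‖) := by
  have hk : 0 < kk k₀ (m + 1) := by unfold kk; positivity
  have hidx : m + 1 - 2 = m - 1 := by omega
  simp only [goyB, Nat.add_eq_zero_iff, one_ne_zero, and_false, if_false, hidx,
    Nat.add_sub_cancel, norm_mul, Complex.norm_I, one_mul, Complex.norm_real, Real.norm_eq_abs,
    abs_of_pos hk]
  refine mul_le_mul_of_nonneg_left ?_ hk.le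
  refine (norm_add_le _ _).trans (add_le_add ((norm_sub_le _ _).trans (add_le_add ?_ ?_)) ?_)
  · simp
  · rw [norm_mul]
    refine mul_le_mul (by simp) ((norm_add_le _ _).trans ?_) (norm_nonneg _) (by norm_num)
    simp
  · simp

/-- The factors `2, 1, 2` come from `kₙ² = 4 kₙ₋₁² = 16 kₙ₋₂²`, `kₙ² = kₙ₊₁² / 4 = kₙ₊₂² / 16`. -/
lemma goyB_pointwise (k₀ : ℝ) (hk₀ : 0 < k₀) (u v : ℕ → ℂ) (hv0 : v 0 = 0) (s : ℝ)
    (hs : ∀ m, (kk k₀ m) ^ 2 * ‖v m‖ ≤ s) (m : ℕ) :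
    kk k₀ (m + 1) * ‖goyB k₀ u v (m + 1)‖ ≤
      s * (2 * ‖u (m + 2)‖ + ‖u (m + 3)‖ + 2 * ‖u m‖) := by
  have hk : 0 < kk k₀ (m + 1) := by unfold kk; positivity
  have hs0 : 0 ≤ s := (by positivity : 0 ≤ (kk k₀ 0) ^ 2 * ‖v 0‖).trans (hs 0)
  have h1 : (kk k₀ (m + 1)) ^ 2 * ‖v m‖ ≤ 4 * s := by
    have := hs m
    have e : kk k₀ (m + 1) = 2 * kk k₀ m := by unfold kk; ring
    rw [e]; nlinarith
  have h2 : (kk k₀ (m + 1)) ^ 2 * ‖v (m + 3)‖ ≤ s / 16 := by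
    have := hs (m + 3)
    have e : kk k₀ (m + 3) = 4 * kk k₀ (m + 1) := by unfold kk; ring
    rw [e] at this; nlinarith
  have h3 : (kk k₀ (m + 1)) ^ 2 * ‖v (m + 2)‖ ≤ s / 4 := by
    have := hs (m + 2)
    have e : kk k₀ (m + 2) = 2 * kk k₀ (m + 1) := by unfold kk; ring
    rw [e] at this; nlinarith
  have h4 : (kk k₀ (m + 1)) ^ 2 * ‖v (m - 1)‖ ≤ 16 * s := by
    cases m with
    | zero =>
      -- Here `m - 1` truncates to `0`, where `v` vanishes.
      simp [hv0, hs0]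
    | succ j =>
      have := hs j
      have e : kk k₀ (j + 1 + 1) = 4 * kk k₀ j := by unfold kk; ring
      rw [e, Nat.add_sub_cancel]; nlinarith
  have hB := mul_le_mul_of_nonneg_left (norm_goyB_succ_le k₀ hk₀ u v m) hk.le
  have a0 := norm_nonneg (u m)
  have a2 := norm_nonneg (u (m + 2))
  have a3 := norm_nonneg (u (m + 3))
  have p1 := mul_le_mul_of_nonneg_left h1 a2
  have p2 := mul_le_mul_of_nonneg_left h2 a2
  have p3 := mul_le_mul_of_nonneg_left h3 a3
  have p4 := mul_le_mul_of_nonneg_left h4 a0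
  have q2 := mul_nonneg hs0 a2
  have q3 := mul_nonneg hs0 a3
  linarith

/-- There exists `C₄ > 0` such that for all `u ∈ H` and `v ∈ D(A)`,
`B(u,v) ∈ V` and `‖B(u,v)‖_V ≤ C₄ |u| |Av|`, i.e.
`Σ (k n)² |Bₙ(u,v)|² ≤ C₄² (Σ |u n|²)(Σ (k n)⁴ |v n|²)`. -/
theorem goyB_bound_H_DA (k₀ : ℝ) (hk₀ : 0 < k₀) :
    ∃ C₄ > 0, ∀ u v : ℕ → ℂ, u 0 = 0 → v 0 = 0 →
      Summable (fun n => ‖u n‖ ^ 2) →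
      Summable (fun n => ‖v n‖ ^ 2) →
      Summable (fun n => (kk k₀ n) ^ 4 * ‖v n‖ ^ 2) →
      Summable (fun n => (kk k₀ n) ^ 2 * ‖goyB k₀ u v n‖ ^ 2) ∧
        (∑' n, (kk k₀ n) ^ 2 * ‖goyB k₀ u v n‖ ^ 2) ≤
          C₄ ^ 2 * (∑' n, ‖u n‖ ^ 2) * (∑' n, (kk k₀ n) ^ 4 * ‖v n‖ ^ 2) := by
  refine ⟨6, by norm_num, fun u v hu0 hv0 hu _ hv => ?_⟩
  set U := ∑' n, ‖u n‖ ^ 2 with hU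
  set S := ∑' n, (kk k₀ n) ^ 4 * ‖v n‖ ^ 2 with hS
  have hS0 : 0 ≤ S := tsum_nonneg fun n => by positivity
  have hU0 : 0 ≤ U := tsum_nonneg fun n => by positivity
  have hs : ∀ m, (kk k₀ m) ^ 2 * ‖v m‖ ≤ √S := fun m => by
    refine Real.le_sqrt_of_sq_le ?_
    have := hv.le_tsum m fun j _ => by positivity
    calc _ = (kk k₀ m) ^ 4 * ‖v m‖ ^ 2 := by ring
      _ ≤ S := this
  have hbound : ∀ m, (kk k₀ (m + 1)) ^ 2 * ‖goyB k₀ u v (m + 1)‖ ^ 2 ≤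
      9 * S * (‖u (m + 2)‖ ^ 2 + ‖u (m + 3)‖ ^ 2 + ‖u m‖ ^ 2) := fun m => by
    have hk : 0 < kk k₀ (m + 1) := by unfold kk; positivity
    have h := goyB_pointwise k₀ hk₀ u v hv0 _ hs m
    have h2 := pow_le_pow_left₀ (by positivity) h 2
    rw [mul_pow, mul_pow, Real.sq_sqrt hS0] at h2
    have hcs : (2 * ‖u (m + 2)‖ + ‖u (m + 3)‖ + 2 * ‖u m‖) ^ 2 ≤
        9 * (‖u (m + 2)‖ ^ 2 + ‖u (m + 3)‖ ^ 2 + ‖u m‖ ^ 2) := by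
      nlinarith [sq_nonneg (‖u (m + 2)‖ - 2 * ‖u (m + 3)‖), sq_nonneg (‖u (m + 2)‖ - ‖u m‖),
        sq_nonneg (2 * ‖u (m + 3)‖ - ‖u m‖)]
    calc _ ≤ _ := h2
      _ ≤ S * (9 * (‖u (m + 2)‖ ^ 2 + ‖u (m + 3)‖ ^ 2 + ‖u m‖ ^ 2)) :=
        mul_le_mul_of_nonneg_left hcs hS0
      _ = _ := by ring
  have hshift : ∀ j, Summable (fun m => ‖u (m + j)‖ ^ 2) := fun j =>
    (summable_nat_add_iff (f := fun n => ‖u n‖ ^ 2) j).2 hu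
  have hshift_le : ∀ j, ∑' m, ‖u (m + j)‖ ^ 2 ≤ U := fun j => by
    have := hu.sum_add_tsum_nat_add j
    have h0 : 0 ≤ ∑ i ∈ Finset.range j, ‖u i‖ ^ 2 := Finset.sum_nonneg fun i _ => by positivity
    linarith
  have hsum3 := (((hshift 2).add (hshift 3)).add hu)
  have hmaj := hsum3.mul_left (9 * S)
  have hsucc : Summable (fun m => (kk k₀ (m + 1)) ^ 2 * ‖goyB k₀ u v (m + 1)‖ ^ 2) :=
    Summable.of_nonneg_of_le (fun m => by positivity) hbound hmaj
  have hfull : Summable (fun n => (kk k₀ n) ^ 2 * ‖goyB k₀ u v n‖ ^ 2) :=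
    (summable_nat_add_iff 1).1 hsucc
  refine ⟨hfull, ?_⟩
  rw [hfull.tsum_eq_zero_add]
  have hzero : goyB k₀ u v 0 = 0 := by simp [goyB]
  have hle := hsucc.tsum_le_tsum hbound hmaj
  rw [tsum_mul_left, ((hshift 2).add (hshift 3)).tsum_add hu,
    (hshift 2).tsum_add (hshift 3)] at hle
  have h3U : 9 * S * (∑' m, ‖u (m + 2)‖ ^ 2 + ∑' m, ‖u (m + 3)‖ ^ 2 + U) ≤ 9 * S * (3 * U) :=
    mul_le_mul_of_nonneg_left (by linarith [hshift_le 2, hshift_le 3]) (by positivity)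
  have hSU := mul_nonneg hS0 hU0
  simp only [hzero, norm_zero]
  linarith
end

section
/- For every u ∈ V and v ∈ H, the energy-conservation identity (B(u,v), v)_H = 0 holds, i.e. Re Σ_{n=1}^∞ B_n(u,v) · \overline{v_n} = 0. -/
/-- The interaction `(i kₘ / 2) · conj (uₘ₊₁ vₘ vₘ₊₂)` of the shells `m`, `m + 1`, `m + 2` in which
`u` sits on the middle shell. -/
noncomputable def fluxMid (k₀ : ℝ) (u v : ℕ → ℂ) (m : ℕ) : ℂ :=
  Complex.I * (kk k₀ m : ℂ) / 2 *
    ((starRingEnd ℂ) (u (m + 1)) * (starRingEnd ℂ) (v m) * (starRingEnd ℂ) (v (m + 2)))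

/-- The interaction `(i kₘ / 2) · conj (uₘ₊₂ vₘ vₘ₊₁)` of the shells `m`, `m + 1`, `m + 2` in which
`u` sits on the top shell. -/
noncomputable def fluxTop (k₀ : ℝ) (u v : ℕ → ℂ) (m : ℕ) : ℂ :=
  Complex.I * (kk k₀ m : ℂ) / 2 *
    ((starRingEnd ℂ) (u (m + 2)) * (starRingEnd ℂ) (v m) * (starRingEnd ℂ) (v (m + 1)))

theorem goyB_mul_conj_add_two (k₀ : ℝ) (u v : ℕ → ℂ) (n : ℕ) :
    goyB k₀ u v (n + 2) * (starRingEnd ℂ) (v (n + 2)) =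
      (fluxTop k₀ u v (n + 1) - fluxTop k₀ u v (n + 2)) +
        (fluxMid k₀ u v n - fluxMid k₀ u v (n + 2)) := by
  have h1 : n + 2 - 1 = n + 1 := rfl
  have h2 : n + 2 - 2 = n := rfl
  simp only [goyB, fluxMid, fluxTop, kk, h1, h2, Nat.add_eq_zero_iff, OfNat.ofNat_ne_zero,
    and_false, if_false]
  push_cast
  ring

theorem goyB_mul_conj_one (k₀ : ℝ) (u v : ℕ → ℂ) (hu0 : u 0 = 0) (hv0 : v 0 = 0) :
    goyB k₀ u v 1 * (starRingEnd ℂ) (v 1) = -fluxTop k₀ u v 1 - fluxMid k₀ u v 1 := by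
  simp only [goyB, fluxMid, fluxTop, one_ne_zero, if_false, Nat.sub_self, hu0, hv0, map_zero]
  norm_num
  ring

/-- Both `fluxMid` (`j = 1`) and `fluxTop` (`j = 2`) are dominated by a bounded factor `b` times the
product of the square summable sequences `kₘ₊ⱼ |uₘ₊ⱼ|` and `|vₘ|`. -/
theorem summable_of_triple_bound (k₀ : ℝ) (hk₀ : 0 < k₀) (u v : ℕ → ℂ)
    (huV : Summable fun n => (kk k₀ n) ^ 2 * ‖u n‖ ^ 2)
    (hvH : Summable fun n => ‖v n‖ ^ 2) (j : ℕ) (C : ℝ) (b : ℕ → ℂ) (hb : ∀ m, ‖b m‖ ≤ C) :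
    Summable fun m => Complex.I * (kk k₀ m : ℂ) / 2 *
      ((starRingEnd ℂ) (u (m + j)) * (starRingEnd ℂ) (v m) * (starRingEnd ℂ) (b m)) := by
  have hu' : Summable fun m => (kk k₀ (m + j)) ^ 2 * ‖u (m + j)‖ ^ 2 :=
    (summable_nat_add_iff j).2 huV
  refine Summable.of_norm_bounded ((hu'.add hvH).mul_right C) fun m => ?_
  have hpos : 0 < kk k₀ m := by unfold kk; positivity
  have hmono : kk k₀ m ≤ kk k₀ (m + j) := by
    unfold kk
    gcongr
    · norm_num
    · omega
  have hC : 0 ≤ C := (norm_nonneg _).trans (hb m)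
  have hnorm : ‖Complex.I * (kk k₀ m : ℂ) / 2 *
      ((starRingEnd ℂ) (u (m + j)) * (starRingEnd ℂ) (v m) * (starRingEnd ℂ) (b m))‖ =
      kk k₀ m * ‖u (m + j)‖ * ‖v m‖ / 2 * ‖b m‖ := by
    simp only [norm_mul, norm_div, Complex.norm_I, Complex.norm_real, RCLike.norm_conj,
      Real.norm_of_nonneg hpos.le, Complex.norm_ofNat]
    ring
  rw [hnorm]
  refine mul_le_mul ?_ (hb m) (norm_nonneg _) (by positivity)
  have h1 : kk k₀ m * ‖u (m + j)‖ * ‖v m‖ ≤ kk k₀ (m + j) * ‖u (m + j)‖ * ‖v m‖ := by gcongr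
  nlinarith [sq_nonneg (kk k₀ (m + j) * ‖u (m + j)‖ - ‖v m‖),
    sq_nonneg (kk k₀ (m + j) * ‖u (m + j)‖), sq_nonneg ‖v m‖]

theorem hasSum_goyB_mul_conj (k₀ : ℝ) (hk₀ : 0 < k₀) (u v : ℕ → ℂ)
    (hu0 : u 0 = 0) (hv0 : v 0 = 0)
    (huV : Summable fun n => (kk k₀ n) ^ 2 * ‖u n‖ ^ 2)
    (hvH : Summable fun n => ‖v n‖ ^ 2) :
    HasSum (fun n => goyB k₀ u v n * (starRingEnd ℂ) (v n)) 0 := by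
  have hv : ∀ m, ‖v m‖ ≤ √(∑' n, ‖v n‖ ^ 2) := fun m =>
    Real.le_sqrt_of_sq_le (hvH.le_tsum m fun _ _ => sq_nonneg _)
  have hP : Summable (fluxMid k₀ u v) :=
    summable_of_triple_bound k₀ hk₀ u v huV hvH 1 _ (fun m => v (m + 2)) fun m => hv (m + 2)
  have hQ : Summable (fluxTop k₀ u v) :=
    summable_of_triple_bound k₀ hk₀ u v huV hvH 2 _ (fun m => v (m + 1)) fun m => hv (m + 1)
  have hP0 : fluxMid k₀ u v 0 = 0 := by simp [fluxMid, hv0]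
  have hQ0 : fluxTop k₀ u v 0 = 0 := by simp [fluxTop, hv0]
  have hP2 := (hasSum_nat_add_iff' 2).2 hP.hasSum
  have hQ1 := (hasSum_nat_add_iff' 1).2 hQ.hasSum
  have hQ2 := (hasSum_nat_add_iff' 2).2 hQ.hasSum
  have h0 : goyB k₀ u v 0 = 0 := by simp [goyB]
  rw [← hasSum_nat_add_iff' 2]
  simp only [goyB_mul_conj_add_two]
  convert (hQ1.sub hQ2).add (hP.hasSum.sub hP2) using 1
  simp only [Finset.sum_range_succ, Finset.sum_range_zero, hP0, hQ0, h0,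
    goyB_mul_conj_one k₀ u v hu0 hv0]
  ring

/-- For every `u ∈ V` and `v ∈ H`, the energy-conservation identity
`(B(u,v), v)_H = 0`, i.e. `Re Σ Bₙ(u,v) * conj (v n) = 0`. -/
theorem goyB_energy_conservation (k₀ : ℝ) (hk₀ : 0 < k₀) (u v : ℕ → ℂ)
    (hu0 : u 0 = 0) (hv0 : v 0 = 0)
    (huH : Summable fun n => ‖u n‖ ^ 2)
    (huV : Summable fun n => (kk k₀ n) ^ 2 * ‖u n‖ ^ 2)
    (hvH : Summable fun n => ‖v n‖ ^ 2) :
    (∑' n, goyB k₀ u v n * (starRingEnd ℂ) (v n)).re = 0 := by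
  rw [(hasSum_goyB_mul_conj k₀ hk₀ u v hu0 hv0 huV hvH).tsum_eq, Complex.zero_re]
end

section
/- For all u, v ∈ V, setting w = u − v, one has (B(u,u) − B(v,v), w)_H = (B(w,v), w)_H. -/
/-- The series defining `P` and `Q` converge absolutely: a bounded factor times the product of two
square-summable ones. -/
lemma summable_triple (k₀ : ℝ) (a b c : ℕ → ℂ) (haH : Summable fun n => ‖a n‖ ^ 2)
    (hbV : Summable fun n => (kk k₀ n) ^ 2 * ‖b n‖ ^ 2)
    (hcH : Summable fun n => ‖c n‖ ^ 2) :
    Summable fun n => (kk k₀ n : ℂ) / 2 * (a n * b n * c n) := by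
  set S := ∑' n, ‖a n‖ ^ 2
  refine Summable.of_norm_bounded (((hbV.add hcH).mul_left (1 + S))) fun n => ?_
  have h1 : ‖a n‖ ^ 2 ≤ S := haH.le_tsum n fun _ _ => by positivity
  have h2 : ‖a n‖ ≤ 1 + S := by nlinarith [sq_nonneg (‖a n‖ - 1)]
  have h3 : |kk k₀ n| * ‖b n‖ * ‖c n‖ / 2 ≤ (kk k₀ n) ^ 2 * ‖b n‖ ^ 2 + ‖c n‖ ^ 2 := by
    rw [← sq_abs (kk k₀ n)]
    nlinarith [sq_nonneg (|kk k₀ n| * ‖b n‖ - ‖c n‖), sq_nonneg (|kk k₀ n| * ‖b n‖ ),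
      sq_nonneg ‖c n‖]
  calc ‖(kk k₀ n : ℂ) / 2 * (a n * b n * c n)‖
      = ‖a n‖ * (|kk k₀ n| * ‖b n‖ * ‖c n‖ / 2) := by
        simp only [norm_mul, norm_div, Complex.norm_real, Real.norm_eq_abs, Complex.norm_ofNat]
        ring
    _ ≤ (1 + S) * ((kk k₀ n) ^ 2 * ‖b n‖ ^ 2 + ‖c n‖ ^ 2) :=
        mul_le_mul h2 h3 (by positivity) ((norm_nonneg _).trans h2)

lemma hasSum_of_shift (j : ℕ) (f g : ℕ → ℂ) (p : ℂ) (hg : HasSum g p)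
    (hf0 : ∀ n < j, f n = 0) (hfg : ∀ n, f (n + j) = g n) : HasSum f p := by
  rw [← hasSum_nat_add_iff' j, Finset.sum_eq_zero fun n hn => hf0 n (Finset.mem_range.1 hn),
    sub_zero]
  simpa only [hfg] using hg

/-- The two telescoping families cancel, stated for the conjugated sequences `a = conj u` and
`b = conj w`. -/
lemma hasSum_telescope (k₀ : ℝ) (a b : ℕ → ℂ) (hb0 : b 0 = 0)
    (haH : Summable fun n => ‖a n‖ ^ 2) (hbH : Summable fun n => ‖b n‖ ^ 2)
    (hbV : Summable fun n => (kk k₀ n) ^ 2 * ‖b n‖ ^ 2) :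
    HasSum (fun n => Complex.I *
      (((kk k₀ n : ℂ) / 4 * (a (n + 1) * b (n - 1) * b n)
          - (kk k₀ n : ℂ) / 2 * (a (n + 2) * b n * b (n + 1)))
        + ((kk k₀ n : ℂ) / 8 * (a (n - 1) * b (n - 2) * b n)
          - (kk k₀ n : ℂ) / 2 * (a (n + 1) * b n * b (n + 2))))) 0 := by
  have hP : HasSum (fun n => (kk k₀ n : ℂ) / 2 * (a (n + 2) * b n * b (n + 1))) _ :=
    (summable_triple k₀ (fun n => a (n + 2)) b (fun n => b (n + 1))
      ((summable_nat_add_iff (f := fun n => ‖a n‖ ^ 2) 2).2 haH) hbV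
      ((summable_nat_add_iff (f := fun n => ‖b n‖ ^ 2) 1).2 hbH)).hasSum
  have hQ : HasSum (fun n => (kk k₀ n : ℂ) / 2 * (a (n + 1) * b n * b (n + 2))) _ :=
    (summable_triple k₀ (fun n => a (n + 1)) b (fun n => b (n + 2))
      ((summable_nat_add_iff (f := fun n => ‖a n‖ ^ 2) 1).2 haH) hbV
      ((summable_nat_add_iff (f := fun n => ‖b n‖ ^ 2) 2).2 hbH)).hasSum
  generalize (∑' _, _ : ℂ) = p at hP
  generalize (∑' _, _ : ℂ) = q at hQ
  -- The remaining two families are `P` and `Q` shifted by one and two places; the entries that the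
  -- shift exposes vanish since `b 0 = 0`, including `b (1 - 2) = b 0`.
  have hP' : HasSum (fun n => (kk k₀ n : ℂ) / 4 * (a (n + 1) * b (n - 1) * b n)) p := by
    refine hasSum_of_shift 1 _ _ p hP (fun n hn => ?_) fun n => ?_
    · obtain rfl : n = 0 := by omega
      simp [hb0]
    · simp only [kk, Nat.add_sub_cancel, pow_succ]
      push_cast
      ring
  have hQ' : HasSum (fun n => (kk k₀ n : ℂ) / 8 * (a (n - 1) * b (n - 2) * b n)) q := by
    refine hasSum_of_shift 2 _ _ q hQ (fun n hn => ?_) fun n => ?_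
    · have h : n - 2 = 0 := by omega
      simp [h, hb0]
    · have h : n + 2 - 1 = n + 1 := by omega
      simp only [kk, Nat.add_sub_cancel, h, pow_succ]
      push_cast
      ring
  simpa using ((hP'.sub hP).add (hQ'.sub hQ)).mul_left Complex.I

/-- Energy cancellation `(B(u,w), w)_H = 0`; the complex series already sums to zero, before taking
real parts. -/
lemma hasSum_goyB_self (k₀ : ℝ) (u w : ℕ → ℂ) (hw0 : w 0 = 0)
    (huH : Summable fun n => ‖u n‖ ^ 2) (hwH : Summable fun n => ‖w n‖ ^ 2)
    (hwV : Summable fun n => (kk k₀ n) ^ 2 * ‖w n‖ ^ 2) :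
    HasSum (fun n => goyB k₀ u w n * (starRingEnd ℂ) (w n)) 0 := by
  have h := hasSum_telescope k₀ (fun n => (starRingEnd ℂ) (u n)) (fun n => (starRingEnd ℂ) (w n))
    (by simp [hw0]) (by simpa using huH) (by simpa using hwH) (by simpa using hwV)
  convert h using 1
  funext n
  rcases Nat.eq_zero_or_pos n with rfl | hn
  · simp [goyB, hw0]
  · simp only [goyB, hn.ne', if_false]
    ring

/-- For all `u, v ∈ V`, setting `w = u - v`, one has
`(B(u,u) - B(v,v), w)_H = (B(w,v), w)_H`. -/
theorem goyB_difference_inner (k₀ : ℝ) (hk₀ : 0 < k₀) (u v : ℕ → ℂ)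
    (hu0 : u 0 = 0) (hv0 : v 0 = 0)
    (huH : Summable fun n => ‖u n‖ ^ 2)
    (huV : Summable fun n => (kk k₀ n) ^ 2 * ‖u n‖ ^ 2)
    (hvH : Summable fun n => ‖v n‖ ^ 2)
    (hvV : Summable fun n => (kk k₀ n) ^ 2 * ‖v n‖ ^ 2) :
    (∑' n, (goyB k₀ u u n - goyB k₀ v v n)
        * (starRingEnd ℂ) (u n - v n)).re =
      (∑' n, goyB k₀ (fun m => u m - v m) v n
        * (starRingEnd ℂ) (u n - v n)).re := by
  have hw0 : (fun m => u m - v m) 0 = 0 := by simp [hu0, hv0]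
  have hsq : ∀ n, ‖u n - v n‖ ^ 2 ≤ 2 * (‖u n‖ ^ 2 + ‖v n‖ ^ 2) := fun n => by
    have h := norm_sub_le (u n) (v n)
    nlinarith [norm_nonneg (u n - v n), sq_nonneg (‖u n‖ - ‖v n‖)]
  have hwH : Summable fun n => ‖u n - v n‖ ^ 2 :=
    Summable.of_nonneg_of_le (fun _ => by positivity) hsq ((huH.add hvH).mul_left 2)
  have hwV : Summable fun n => (kk k₀ n) ^ 2 * ‖u n - v n‖ ^ 2 :=
    Summable.of_nonneg_of_le (fun _ => by positivity)
      (fun n => by nlinarith [mul_le_mul_of_nonneg_left (hsq n) (sq_nonneg (kk k₀ n))])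
      ((huV.add hvV).mul_left 2)
  have hD := hasSum_goyB_self k₀ u (fun m => u m - v m) hw0 huH hwH hwV
  have hsplit : (fun n => (goyB k₀ u u n - goyB k₀ v v n) * (starRingEnd ℂ) (u n - v n)) =
      fun n => goyB k₀ (fun m => u m - v m) v n * (starRingEnd ℂ) (u n - v n)
        + goyB k₀ u (fun m => u m - v m) n * (starRingEnd ℂ) (u n - v n) := by
    funext n
    rw [← add_mul]
    congr 1
    unfold goyB
    split_ifs
    · simp
    · simp only [map_sub]
      ring
  congr 1
  rw [hsplit]
  -- Adding a summable series does not affect summability, so both sums are `0` by convention if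
  -- the one on the right diverges.
  by_cases hs : Summable fun n => goyB k₀ (fun m => u m - v m) v n * (starRingEnd ℂ) (u n - v n)
  · rw [hs.tsum_add hD.summable, hD.tsum_eq, add_zero]
  · rw [tsum_eq_zero_of_not_summable hs, tsum_eq_zero_of_not_summable]
    intro h
    exact hs (by simpa using h.sub hD.summable)
end

section
/- There exists a constant C > 0 such that for all w ∈ V and v ∈ V, |(B(w,v), w)_H| ≤ C ‖v‖_{ℓ⁴} ‖w‖_{ℓ⁴} ‖w‖, where ‖·‖ is the V-norm and ‖·‖_{ℓ⁴} the ℓ⁴-norm. -/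
/-- Hölder's inequality with exponents `4, 4, 2` for finite sums, phrased with upper bounds for the
three sums of powers. -/
theorem sum_mul_mul_le_l4 (s : Finset ℕ) (a b c : ℕ → ℝ) {A B S : ℝ}
    (hA : ∑ n ∈ s, a n ^ 4 ≤ A) (hB : ∑ n ∈ s, b n ^ 4 ≤ B) (hS : ∑ n ∈ s, c n ^ 2 ≤ S) :
    ∑ n ∈ s, a n * b n * c n ≤ B ^ ((1 : ℝ) / 4) * A ^ ((1 : ℝ) / 4) * √S := by
  have hA0 : 0 ≤ A := le_trans (Finset.sum_nonneg fun n _ => by positivity) hA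
  have hB0 : 0 ≤ B := le_trans (Finset.sum_nonneg fun n _ => by positivity) hB
  have h1 := Real.sum_mul_le_sqrt_mul_sqrt s (fun n => a n * b n) c
  have h2 := Real.sum_mul_le_sqrt_mul_sqrt s (fun n => a n ^ 2) (fun n => b n ^ 2)
  have h3 : ∑ n ∈ s, (a n * b n) ^ 2 ≤ √A * √B := by
    calc ∑ n ∈ s, (a n * b n) ^ 2 = ∑ n ∈ s, a n ^ 2 * b n ^ 2 := by simp only [mul_pow]
      _ ≤ _ := h2
      _ ≤ √A * √B := by
        simp only [← pow_mul, Nat.reduceMul]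
        gcongr
  have hroot : ∀ x : ℝ, 0 ≤ x → √(√x) = x ^ ((1 : ℝ) / 4) := fun x hx => by
    rw [Real.sqrt_eq_rpow, Real.sqrt_eq_rpow, ← Real.rpow_mul hx]
    norm_num
  calc _ ≤ _ := h1
    _ ≤ √(√A * √B) * √S := by gcongr
    _ = _ := by
      rw [Real.sqrt_mul (Real.sqrt_nonneg A), hroot A hA0, hroot B hB0]
      ring

/-- Reindexing a nonnegative summable sequence by a map that is injective wherever the reindexed
sequence does not vanish does not increase its sum. -/
theorem sum_comp_le_tsum_of_injOn_support (g : ℕ → ℝ) (hg : ∀ n, 0 ≤ g n) (hs : Summable g)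
    (f : ℕ → ℕ) (hf : ∀ m n, g (f m) ≠ 0 → f m = f n → m = n) (s : Finset ℕ) :
    ∑ n ∈ s, g (f n) ≤ ∑' n, g n := by
  rw [← Finset.sum_filter_ne_zero, ← Finset.sum_image (s := s.filter fun n => g (f n) ≠ 0)
    (g := f) (f := g)]
  · exact hs.sum_le_tsum _ fun n _ => hg n
  · intro m hm n _ hmn
    exact hf m n (Finset.mem_filter.1 hm).2 hmn

theorem summable_norm_pow_four {u : ℕ → ℂ} (hu : Summable fun n => ‖u n‖ ^ 2) :
    Summable fun n => ‖u n‖ ^ 4 := by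
  refine summable_of_sum_le (c := (∑' n, ‖u n‖ ^ 2) ^ 2) (fun n => by positivity) fun s => ?_
  calc ∑ n ∈ s, ‖u n‖ ^ 4 = ∑ n ∈ s, (‖u n‖ ^ 2) ^ 2 := by simp only [← pow_mul, Nat.reduceMul]
    _ ≤ (∑ n ∈ s, ‖u n‖ ^ 2) ^ 2 := Finset.sum_sq_le_sq_sum_of_nonneg fun n _ => by positivity
    _ ≤ _ := by
      gcongr
      exact hu.sum_le_tsum _ fun n _ => by positivity

theorem norm_goyB_mul_conj_le (k₀ : ℝ) (hk₀ : 0 < k₀) (w v : ℕ → ℂ) (n : ℕ) :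
    ‖goyB k₀ w v n * (starRingEnd ℂ) (w n)‖ ≤
      1 / 4 * (‖w (n + 1)‖ * ‖v (n - 1)‖ * (kk k₀ n * ‖w n‖))
      + 1 / 2 * (‖w (n + 1)‖ * ‖v (n + 2)‖ * (kk k₀ n * ‖w n‖))
      + 1 / 2 * (‖w (n + 2)‖ * ‖v (n + 1)‖ * (kk k₀ n * ‖w n‖))
      + 1 / 8 * (‖w (n - 1)‖ * ‖v (n - 2)‖ * (kk k₀ n * ‖w n‖)) := by
  have hk : 0 ≤ kk k₀ n := by unfold kk; positivity
  unfold goyB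
  split_ifs with hn
  · rw [zero_mul, norm_zero]
    positivity
  · have key : ∀ p q r t : ℂ, ‖1 / 4 * p - 1 / 2 * (q + r) + 1 / 8 * t‖ ≤
        1 / 4 * ‖p‖ + 1 / 2 * ‖q‖ + 1 / 2 * ‖r‖ + 1 / 8 * ‖t‖ := fun p q r t => by
      have h1 := norm_add_le (1 / 4 * p - 1 / 2 * (q + r)) (1 / 8 * t)
      have h2 := norm_sub_le (1 / 4 * p) (1 / 2 * (q + r))
      have h3 := norm_add_le q r
      have e1 : ‖(1 / 4 : ℂ) * p‖ = 1 / 4 * ‖p‖ := by simp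
      have e2 : ‖(1 / 2 : ℂ) * (q + r)‖ = 1 / 2 * ‖q + r‖ := by simp
      have e3 : ‖(1 / 8 : ℂ) * t‖ = 1 / 8 * ‖t‖ := by simp
      linarith
    have h := key ((starRingEnd ℂ) (w (n + 1)) * (starRingEnd ℂ) (v (n - 1)))
      ((starRingEnd ℂ) (w (n + 1)) * (starRingEnd ℂ) (v (n + 2)))
      ((starRingEnd ℂ) (w (n + 2)) * (starRingEnd ℂ) (v (n + 1)))
      ((starRingEnd ℂ) (w (n - 1)) * (starRingEnd ℂ) (v (n - 2)))
    simp only [← mul_assoc] at h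
    rw [norm_mul, norm_mul, norm_mul, Complex.norm_I, Complex.norm_real, Real.norm_of_nonneg hk,
      Complex.norm_conj, one_mul]
    refine (mul_le_mul_of_nonneg_right (mul_le_mul_of_nonneg_left h hk) (norm_nonneg _)).trans ?_
    simp only [norm_mul, Complex.norm_conj]
    apply le_of_eq
    ring

/-- There exists `C > 0` such that for all `w, v ∈ V`,
`|(B(w,v), w)_H| ≤ C ‖v‖_{ℓ⁴} ‖w‖_{ℓ⁴} ‖w‖`. -/
theorem goyB_trilinear_l4_bound (k₀ : ℝ) (hk₀ : 0 < k₀) :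
    ∃ C > 0, ∀ w v : ℕ → ℂ, w 0 = 0 → v 0 = 0 →
      Summable (fun n => ‖w n‖ ^ 2) →
      Summable (fun n => (kk k₀ n) ^ 2 * ‖w n‖ ^ 2) →
      Summable (fun n => ‖v n‖ ^ 2) →
      Summable (fun n => (kk k₀ n) ^ 2 * ‖v n‖ ^ 2) →
      |(∑' n, goyB k₀ w v n * (starRingEnd ℂ) (w n)).re| ≤
        C * (∑' n, ‖v n‖ ^ 4) ^ ((1 : ℝ) / 4) * (∑' n, ‖w n‖ ^ 4) ^ ((1 : ℝ) / 4)
          * Real.sqrt (∑' n, (kk k₀ n) ^ 2 * ‖w n‖ ^ 2) := by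
  refine ⟨11 / 8, by norm_num, fun w v hw0 hv0 hw hkw hv _ => ?_⟩
  have hw4 := summable_norm_pow_four hw
  have hv4 := summable_norm_pow_four hv
  set A := ∑' n, ‖w n‖ ^ 4
  set B := ∑' n, ‖v n‖ ^ 4
  set S := ∑' n, (kk k₀ n) ^ 2 * ‖w n‖ ^ 2
  set M := B ^ ((1 : ℝ) / 4) * A ^ ((1 : ℝ) / 4) * √S with hM
  -- The estimate for one summand, where `f` and `g` are the index shifts of `w` and `v`.
  have hterm : ∀ (s : Finset ℕ) (f g : ℕ → ℕ), (∀ m n, f m ≠ 0 → f m = f n → m = n) →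
      (∀ m n, g m ≠ 0 → g m = g n → m = n) →
      ∑ n ∈ s, ‖w (f n)‖ * ‖v (g n)‖ * (kk k₀ n * ‖w n‖) ≤ M := by
    intro s f g hf hg
    refine sum_mul_mul_le_l4 s _ _ _ ?_ ?_ ?_
    · refine sum_comp_le_tsum_of_injOn_support (fun n => ‖w n‖ ^ 4) (fun n => by positivity) hw4 f
        (fun m n hm => hf m n fun h => hm ?_) s
      simp [h, hw0]
    · refine sum_comp_le_tsum_of_injOn_support (fun n => ‖v n‖ ^ 4) (fun n => by positivity) hv4 g
        (fun m n hm => hg m n fun h => hm ?_) s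
      simp [h, hv0]
    · simp only [mul_pow]
      exact hkw.sum_le_tsum _ fun n _ => by positivity
  have hsum : ∀ s : Finset ℕ,
      ∑ n ∈ s, ‖goyB k₀ w v n * (starRingEnd ℂ) (w n)‖ ≤ 11 / 8 * M := by
    intro s
    refine (Finset.sum_le_sum fun n _ => norm_goyB_mul_conj_le k₀ hk₀ w v n).trans ?_
    simp only [Finset.sum_add_distrib, ← Finset.mul_sum]
    have h1 := hterm s (· + 1) (· - 1) (by grind) (by grind)
    have h2 := hterm s (· + 1) (· + 2) (by grind) (by grind)
    have h3 := hterm s (· + 2) (· + 1) (by grind) (by grind)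
    have h4 := hterm s (· - 1) (· - 2) (by grind) (by grind)
    linarith
  calc _ ≤ ‖∑' n, goyB k₀ w v n * (starRingEnd ℂ) (w n)‖ := Complex.abs_re_le_norm _
    _ ≤ ∑' n, ‖goyB k₀ w v n * (starRingEnd ℂ) (w n)‖ :=
      norm_tsum_le_tsum_norm (summable_of_sum_le (fun n => norm_nonneg _) hsum)
    _ ≤ 11 / 8 * M := Real.tsum_le_of_sum_le (fun n => norm_nonneg _) hsum
    _ = _ := by rw [hM]; ring
end

section
/- There exists a constant C > 0 such that for every ν > 0 and all w ∈ V, v ∈ V, the lower bound −(B(w,v), w)_H ≤ (ν/2) ‖w‖² + (27 C⁴/(32 ν³)) |w|² ‖v‖_{ℓ⁴}⁴ holds. -/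
/-- The pointwise bound on the trilinear form, after Young's inequality with parameter `ν`, when
`V` dominates all components of `v`. -/
lemma norm_goyB_mul_le {k₀ ν V : ℝ} (hk₀ : 0 < k₀) (hν : 0 < ν) (w v : ℕ → ℂ)
    (hv : ∀ n, ‖v n‖ ≤ V) (n : ℕ) :
    ‖goyB k₀ w v n * (starRingEnd ℂ) (w n)‖ ≤
      ν / 4 * ((kk k₀ n) ^ 2 * ‖w n‖ ^ 2)
        + 3 * V ^ 2 / ν * (‖w (n + 1)‖ ^ 2 + ‖w (n + 2)‖ ^ 2 + ‖w (n - 1)‖ ^ 2) := by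
  have hk : 0 < kk k₀ n := by unfold kk; positivity
  have hV : 0 ≤ V := (norm_nonneg _).trans (hv 0)
  by_cases hn : n = 0
  · have : goyB k₀ w v n = 0 := by simp [goyB, hn]
    rw [this, zero_mul, norm_zero]
    positivity
  set z : ℝ := 3 / 4 * ‖w (n + 1)‖ + 1 / 2 * ‖w (n + 2)‖ + 1 / 8 * ‖w (n - 1)‖ with hz
  have hB : ‖goyB k₀ w v n‖ ≤ kk k₀ n * (V * z) := by
    rw [goyB, if_neg hn, norm_mul, norm_mul, Complex.norm_I, one_mul, Complex.norm_real,
      Real.norm_of_nonneg hk.le]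
    refine mul_le_mul_of_nonneg_left ?_ hk.le
    refine (norm_add_le _ _).trans ?_
    have hmid : ‖(1 / 2 : ℂ) * ((starRingEnd ℂ) (w (n + 1)) * (starRingEnd ℂ) (v (n + 2))
        + (starRingEnd ℂ) (w (n + 2)) * (starRingEnd ℂ) (v (n + 1)))‖
        ≤ 1 / 2 * (‖w (n + 1)‖ * ‖v (n + 2)‖ + ‖w (n + 2)‖ * ‖v (n + 1)‖) := by
      rw [norm_mul]
      refine mul_le_mul (by norm_num) ((norm_add_le _ _).trans ?_) (norm_nonneg _) (by norm_num)
      simp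
    refine (add_le_add_left ((norm_sub_le _ _).trans (add_le_add_right hmid _)) _).trans ?_
    simp only [norm_mul, RCLike.norm_conj]
    have e4 : ‖(1 / 4 : ℂ)‖ = 1 / 4 := by norm_num
    have e8 : ‖(1 / 8 : ℂ)‖ = 1 / 8 := by norm_num
    rw [e4, e8]
    have h1 := mul_le_mul_of_nonneg_left (hv (n - 1)) (norm_nonneg (w (n + 1)))
    have h2 := mul_le_mul_of_nonneg_left (hv (n + 2)) (norm_nonneg (w (n + 1)))
    have h3 := mul_le_mul_of_nonneg_left (hv (n + 1)) (norm_nonneg (w (n + 2)))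
    have h4 := mul_le_mul_of_nonneg_left (hv (n - 2)) (norm_nonneg (w (n - 1)))
    rw [hz]
    linarith
  have hz2 : z ^ 2 ≤ 3 * (‖w (n + 1)‖ ^ 2 + ‖w (n + 2)‖ ^ 2 + ‖w (n - 1)‖ ^ 2) := by
    rw [hz]
    nlinarith [sq_nonneg (‖w (n + 1)‖ - ‖w (n + 2)‖), sq_nonneg (‖w (n + 1)‖ - ‖w (n - 1)‖),
      sq_nonneg (‖w (n + 2)‖ - ‖w (n - 1)‖), sq_nonneg (‖w (n + 1)‖), sq_nonneg (‖w (n + 2)‖),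
      sq_nonneg (‖w (n - 1)‖)]
  have hyoung : kk k₀ n * (V * z) * ‖w n‖ ≤
      ν / 4 * ((kk k₀ n) ^ 2 * ‖w n‖ ^ 2) + V ^ 2 / ν * z ^ 2 := by
    have : ν / 4 * ((kk k₀ n) ^ 2 * ‖w n‖ ^ 2) + V ^ 2 / ν * z ^ 2 - kk k₀ n * (V * z) * ‖w n‖
        = (ν * (kk k₀ n * ‖w n‖) / 2 - V * z) ^ 2 / ν := by
      field_simp
      ring
    have h0 : 0 ≤ (ν * (kk k₀ n * ‖w n‖) / 2 - V * z) ^ 2 / ν := by positivity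
    linarith
  rw [norm_mul, RCLike.norm_conj]
  calc ‖goyB k₀ w v n‖ * ‖w n‖ ≤ kk k₀ n * (V * z) * ‖w n‖ := by gcongr
    _ ≤ _ := hyoung
    _ ≤ ν / 4 * ((kk k₀ n) ^ 2 * ‖w n‖ ^ 2) + V ^ 2 / ν *
        (3 * (‖w (n + 1)‖ ^ 2 + ‖w (n + 2)‖ ^ 2 + ‖w (n - 1)‖ ^ 2)) := by gcongr
    _ = _ := by ring

/-- There exists `C > 0` such that for every `ν > 0` and all `w, v ∈ V`,
`-(B(w,v), w)_H ≤ (ν/2) ‖w‖² + (27 C⁴ / (32 ν³)) |w|² ‖v‖_{ℓ⁴}⁴`. -/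
theorem goyB_trilinear_young_bound (k₀ : ℝ) (hk₀ : 0 < k₀) :
    ∃ C > 0, ∀ ν : ℝ, 0 < ν → ∀ w v : ℕ → ℂ, w 0 = 0 → v 0 = 0 →
      Summable (fun n => ‖w n‖ ^ 2) →
      Summable (fun n => (kk k₀ n) ^ 2 * ‖w n‖ ^ 2) →
      Summable (fun n => ‖v n‖ ^ 2) →
      Summable (fun n => (kk k₀ n) ^ 2 * ‖v n‖ ^ 2) →
      -(∑' n, goyB k₀ w v n * (starRingEnd ℂ) (w n)).re ≤
        (ν / 2) * (∑' n, (kk k₀ n) ^ 2 * ‖w n‖ ^ 2)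
          + (27 * C ^ 4 / (32 * ν ^ 3)) * (∑' n, ‖w n‖ ^ 2) * (∑' n, ‖v n‖ ^ 4) := by
  refine ⟨1 + 96 / k₀ ^ 2, by positivity, ?_⟩
  intro ν hν w v hw0 _ hw hkw hv2 _
  have hv4 : Summable (fun n => ‖v n‖ ^ 4) := by
    refine Summable.of_nonneg_of_le (fun n => by positivity) (fun n => ?_)
      (hv2.mul_left (∑' n, ‖v n‖ ^ 2))
    have h := hv2.le_tsum n (fun j _ => by positivity)
    calc ‖v n‖ ^ 4 = ‖v n‖ ^ 2 * ‖v n‖ ^ 2 := by ring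
      _ ≤ _ := by gcongr
  set S := ∑' n, ‖v n‖ ^ 4 with hS
  set W := ∑' n, ‖w n‖ ^ 2 with hW
  set X := ∑' n, (kk k₀ n) ^ 2 * ‖w n‖ ^ 2 with hX
  have hS0 : 0 ≤ S := tsum_nonneg fun n => by positivity
  have hW0 : 0 ≤ W := tsum_nonneg fun n => by positivity
  -- `V` is the `ℓ⁴`-norm of `v`.
  obtain ⟨V, hV0, hV4⟩ : ∃ V : ℝ, 0 ≤ V ∧ V ^ 4 = S := by
    refine ⟨√(√S), by positivity, ?_⟩
    rw [show (4 : ℕ) = 2 * 2 from rfl, pow_mul, Real.sq_sqrt (Real.sqrt_nonneg _),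
      Real.sq_sqrt hS0]
  have hvV : ∀ n, ‖v n‖ ≤ V := fun n => by
    refine le_of_pow_le_pow_left₀ (n := 4) (by norm_num) hV0 ?_
    rw [hV4]
    exact hv4.le_tsum n (fun j _ => by positivity)
  have hs1 : Summable (fun n => ‖w (n + 1)‖ ^ 2) :=
    (summable_nat_add_iff (f := fun n => ‖w n‖ ^ 2) 1).2 hw
  have hs2 : Summable (fun n => ‖w (n + 2)‖ ^ 2) :=
    (summable_nat_add_iff (f := fun n => ‖w n‖ ^ 2) 2).2 hw
  have hs3 : Summable (fun n => ‖w (n - 1)‖ ^ 2) :=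
    (summable_nat_add_iff (f := fun n => ‖w (n - 1)‖ ^ 2) 1).1 (by simpa using hw)
  have ht1 : ∑' n, ‖w (n + 1)‖ ^ 2 ≤ W := by
    have := hw.tsum_eq_zero_add
    rw [hW, this]
    simp [hw0]
  have ht2 : ∑' n, ‖w (n + 2)‖ ^ 2 ≤ W := by
    have := hs1.tsum_eq_zero_add
    have h0 : 0 ≤ ‖w (0 + 1)‖ ^ 2 := by positivity
    have h2 : ∑' n, ‖w (n + 1 + 1)‖ ^ 2 = ∑' n, ‖w (n + 2)‖ ^ 2 := rfl
    linarith
  -- Truncated subtraction makes the term at `n = 0` equal to `‖w 0‖ ^ 2 = 0`.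
  have ht3 : ∑' n, ‖w (n - 1)‖ ^ 2 = W := by
    rw [hs3.tsum_eq_zero_add]
    simp [hw0, hW]
  have hsum := (hkw.hasSum.mul_left (ν / 4)).add
    (((hs1.hasSum.add hs2.hasSum).add hs3.hasSum).mul_left (3 * V ^ 2 / ν))
  have hmain := tsum_of_norm_bounded hsum (norm_goyB_mul_le hk₀ hν w v hvV)
  have hre := (neg_le_abs _).trans ((Complex.abs_re_le_norm
    (∑' n, goyB k₀ w v n * (starRingEnd ℂ) (w n))).trans hmain)
  have hpoinc : k₀ ^ 2 * W ≤ X := by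
    rw [hW, ← tsum_mul_left]
    refine (hw.mul_left _).tsum_le_tsum (fun n => ?_) hkw
    have : k₀ ≤ kk k₀ n := le_mul_of_one_le_right hk₀.le (one_le_pow₀ (by norm_num))
    gcongr
  have hfirst : 3 * V ^ 2 / ν * (∑' n, ‖w (n + 1)‖ ^ 2 + ∑' n, ‖w (n + 2)‖ ^ 2
      + ∑' n, ‖w (n - 1)‖ ^ 2) ≤ 9 * V ^ 2 / ν * W := by
    calc _ ≤ 3 * V ^ 2 / ν * (3 * W) := by gcongr; linarith
      _ = _ := by ring
  have hyoung : 9 * V ^ 2 / ν ≤ ν / 4 * k₀ ^ 2 + 81 / (k₀ ^ 2 * ν ^ 3) * S := by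
    have : ν / 4 * k₀ ^ 2 + 81 / (k₀ ^ 2 * ν ^ 3) * S - 9 * V ^ 2 / ν
        = (ν ^ 2 * k₀ ^ 2 / 2 - 9 * V ^ 2) ^ 2 / (k₀ ^ 2 * ν ^ 3) := by
      rw [← hV4]
      field_simp
      ring
    have h0 : 0 ≤ (ν ^ 2 * k₀ ^ 2 / 2 - 9 * V ^ 2) ^ 2 / (k₀ ^ 2 * ν ^ 3) := by positivity
    linarith
  have hC : 81 / (k₀ ^ 2 * ν ^ 3) ≤ 27 * (1 + 96 / k₀ ^ 2) ^ 4 / (32 * ν ^ 3) := by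
    have h1 : (1 : ℝ) ≤ 1 + 96 / k₀ ^ 2 := le_add_of_nonneg_right (by positivity)
    have h2 : 96 / k₀ ^ 2 ≤ (1 + 96 / k₀ ^ 2) ^ 4 :=
      le_trans (by linarith) (le_self_pow₀ h1 (by norm_num))
    calc 81 / (k₀ ^ 2 * ν ^ 3) = 27 * (96 / k₀ ^ 2) / (32 * ν ^ 3) := by
          field_simp
          norm_num
      _ ≤ _ := by gcongr
  have hA := mul_le_mul_of_nonneg_right hyoung hW0
  have hB := mul_le_mul_of_nonneg_right hC (mul_nonneg hW0 hS0)
  have hD := mul_le_mul_of_nonneg_left hpoinc (by positivity : 0 ≤ ν / 4)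
  linarith
end
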